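/- Let (M,𝒳) be a small n-exact category and Y : Y⁰ → Y¹ → ⋯ → Yⁿ → Y^{n+1} a complex in M such that every homology object of the complex 0 → H_{Y⁰} → H_{Y¹} → ⋯ → H_{Yⁿ} → H_{Y^{n+1}} → 0 of representable functors in Mod(M) is weakly effaceable (equivalently, the induced sequence is exact in the localization of Mod(M) at the weakly effaceable functors). Then Y is an 𝒳-admissible n-exact sequence, i.e., Y ∈ 𝒳. -/

import Mathlib

open CategoryTheory CategoryTheory.Limits Opposite

attribute [local instance] CategoryTheory.Limits.hasBinaryBiproducts_of_finite_biproducts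

universe u

namespace NExactCat

variable {M : Type u} [SmallCategory M] [Preadditive M] [HasFiniteBiproducts M]

/-- A sequence (`ℕ`-indexed, only the indices `0, …, n+1` of the objects and `0, …, n` of the
maps being relevant) of composable morphisms in an additive category. -/
structure NSeq (M : Type u) [SmallCategory M] where
  X : ℕ → M
  d : ∀ i, X i ⟶ X (i + 1)

/-- `S` is a complex (in degrees `0, …, n+1`). -/
def NSeq.IsComplex (n : ℕ) (S : NSeq M) : Prop :=
  ∀ i, i + 1 ≤ n → S.d i ≫ S.d (i + 1) = 0

/-- `(d¹,…,dⁿ)` is an `n`-cokernel of `d⁰`: for every `W` the sequence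
`0 → Hom(X^{n+1},W) → Hom(Xⁿ,W) → ⋯ → Hom(X⁰,W)` of abelian groups is exact. -/
def RightNExact (n : ℕ) (S : NSeq M) : Prop :=
  (∀ W : M, Function.Injective fun g : S.X (n + 1) ⟶ W => S.d n ≫ g) ∧
  (∀ W : M, ∀ i, i < n → Function.Exact
      (fun g : S.X (i + 2) ⟶ W => S.d (i + 1) ≫ g)
      (fun g : S.X (i + 1) ⟶ W => S.d i ≫ g))

/-- `(d⁰,…,d^{n-1})` is an `n`-kernel of `dⁿ`: for every `W` the sequence
`0 → Hom(W,X⁰) → Hom(W,X¹) → ⋯ → Hom(W,X^{n+1})` of abelian groups is exact. -/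
def LeftNExact (n : ℕ) (S : NSeq M) : Prop :=
  (∀ W : M, Function.Injective fun g : W ⟶ S.X 0 => g ≫ S.d 0) ∧
  (∀ W : M, ∀ i, i < n → Function.Exact
      (fun g : W ⟶ S.X i => g ≫ S.d i)
      (fun g : W ⟶ S.X (i + 1) => g ≫ S.d (i + 1)))

/-- An `n`-exact sequence: a complex which is both a left and a right `n`-exact sequence. -/
def IsNExactSeq (n : ℕ) (S : NSeq M) : Prop :=
  S.IsComplex n ∧ LeftNExact n S ∧ RightNExact n S

/-- `f` is a morphism of complexes `S ⟶ T` (in degrees `0, …, n+1`). -/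
def IsNSeqHom (n : ℕ) (S T : NSeq M) (f : ∀ i, S.X i ⟶ T.X i) : Prop :=
  ∀ i, i ≤ n → S.d i ≫ f (i + 1) = f i ≫ T.d i

/-- There is a weak isomorphism `S ⟶ T`: a morphism of complexes whose components `f k` and
`f (k+1)` are isomorphisms for some `k ∈ {0,…,n+1}`, indices taken modulo `n+2`. -/
def ExistsWeakIso (n : ℕ) (S T : NSeq M) : Prop :=
  ∃ f : ∀ i, S.X i ⟶ T.X i, IsNSeqHom n S T f ∧
    ((∃ k ≤ n, IsIso (f k) ∧ IsIso (f (k + 1))) ∨ (IsIso (f (n + 1)) ∧ IsIso (f 0)))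

/-- The objects of the mapping cone `X⁰ → X¹ ⊞ Y⁰ → ⋯ → Xⁿ ⊞ Y^{n-1} → Yⁿ` of a morphism of
complexes indexed by `0, …, n`. -/
noncomputable def coneX (n : ℕ) (S T : NSeq M) (i : ℕ) : M :=
  if i = 0 then S.X 0 else if i ≤ n then S.X i ⊞ T.X (i - 1) else T.X n

lemma coneX_zero (n : ℕ) (S T : NSeq M) : coneX n S T 0 = S.X 0 := by simp [coneX]

lemma coneX_mid (n : ℕ) (S T : NSeq M) {i : ℕ} (h0 : i ≠ 0) (h1 : i ≤ n) :
    coneX n S T i = (S.X i ⊞ T.X (i - 1)) := by simp [coneX, h0, h1]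

lemma coneX_top (n : ℕ) (S T : NSeq M) {i : ℕ} (h : n < i) :
    coneX n S T i = T.X n := by
  have h0 : i ≠ 0 := by omega
  have h1 : ¬ i ≤ n := by omega
  simp [coneX, h0, h1]

/-- The differentials of the mapping cone, given in matrix form by
`d_C^k = ((-d_X^{k+1}, 0), (f^{k+1}, d_Y^k))`. -/
noncomputable def coneD (n : ℕ) (S T : NSeq M) (f : ∀ i, S.X i ⟶ T.X i) (i : ℕ) :
    coneX n S T i ⟶ coneX n S T (i + 1) :=
  if h0 : i = 0 then
    (if h1 : 1 ≤ n then
      eqToHom (show coneX n S T i = S.X 0 by subst h0; exact coneX_zero n S T) ≫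
        biprod.lift (-(S.d 0)) (f 0) ≫
        eqToHom (show (S.X 1 ⊞ T.X 0) = coneX n S T (i + 1) by
          subst h0; exact (coneX_mid n S T one_ne_zero h1).symm)
    else 0)
  else if h1 : i + 1 ≤ n then
    eqToHom (coneX_mid n S T h0 (by omega)) ≫
      biprod.lift (biprod.fst ≫ (-(S.d i)))
        (biprod.fst ≫ f i + biprod.snd ≫ (T.d (i - 1) ≫
          eqToHom (congrArg T.X (by omega : i - 1 + 1 = i)))) ≫
      eqToHom ((coneX_mid n S T (Nat.succ_ne_zero i) h1).symm)
  else if h2 : i = n then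
    eqToHom (coneX_mid n S T h0 (by omega)) ≫
      biprod.desc (f i) (T.d (i - 1) ≫ eqToHom (congrArg T.X (by omega : i - 1 + 1 = i))) ≫
      eqToHom (show T.X i = coneX n S T (i + 1) by
        rw [h2]; exact (coneX_top n S T (by omega)).symm)
  else 0

/-- The mapping cone, as an `NSeq`. -/
noncomputable def cone (n : ℕ) (S T : NSeq M) (f : ∀ i, S.X i ⟶ T.X i) : NSeq M :=
  ⟨coneX n S T, coneD n S T f⟩

/-- The diagram determined by `f` is an `n`-pushout: the mapping cone is a right `n`-exact
sequence. -/
def IsNPushout (n : ℕ) (S T : NSeq M) (f : ∀ i, S.X i ⟶ T.X i) : Prop :=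
  RightNExact n (cone n S T f)

/-- The diagram determined by `f` is an `n`-pullback: the mapping cone is a left `n`-exact
sequence. -/
def IsNPullback (n : ℕ) (S T : NSeq M) (f : ∀ i, S.X i ⟶ T.X i) : Prop :=
  LeftNExact n (cone n S T f)

/-- The shift of a sequence, `(shift S).X i = S.X (i+1)`. -/
def NSeq.shift (S : NSeq M) : NSeq M :=
  ⟨fun i => S.X (i + 1), fun i => S.d (i + 1)⟩

/-- `g` is an `𝒳`-admissible monomorphism: it occurs as the first differential of a member
of `𝒳`. -/
def AdmMono (𝒳 : Set (NSeq M)) {A B : M} (g : A ⟶ B) : Prop :=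
  ∃ Z ∈ 𝒳, ∃ (h0 : Z.X 0 = A) (h1 : Z.X 1 = B), Z.d 0 = eqToHom h0 ≫ g ≫ eqToHom h1.symm

/-- `g` is an `𝒳`-admissible epimorphism: it occurs as the last differential of a member
of `𝒳`. -/
def AdmEpi (n : ℕ) (𝒳 : Set (NSeq M)) {A B : M} (g : A ⟶ B) : Prop :=
  ∃ Z ∈ 𝒳, ∃ (h0 : Z.X n = A) (h1 : Z.X (n + 1) = B),
    Z.d n = eqToHom h0 ≫ g ≫ eqToHom h1.symm

/-- `𝒳` is an `n`-exact structure on `M`: a class of `n`-exact sequences, closed under weak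
isomorphisms, satisfying the axioms (E0), (E1), (E1ᵒᵖ), (E2) and (E2ᵒᵖ). -/
structure IsNExactStructure (n : ℕ) (𝒳 : Set (NSeq M)) : Prop where
  /-- members of `𝒳` are `n`-exact sequences -/
  nExact : ∀ Z ∈ 𝒳, IsNExactSeq n Z
  /-- `𝒳` is closed under weak isomorphisms -/
  weakIsoClosed : ∀ Z ∈ 𝒳, ∀ T : NSeq M, IsNExactSeq n T →
      (ExistsWeakIso n Z T ∨ ExistsWeakIso n T Z) → T ∈ 𝒳
  /-- (E0): the zero sequence `0 → 0 → ⋯ → 0` is admissible -/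
  zero_mem : ∃ Z ∈ 𝒳, ∀ i ≤ n + 1, IsZero (Z.X i)
  /-- (E1): admissible monomorphisms are closed under composition -/
  monoComp : ∀ {A B C : M} (g₁ : A ⟶ B) (g₂ : B ⟶ C),
      AdmMono 𝒳 g₁ → AdmMono 𝒳 g₂ → AdmMono 𝒳 (g₁ ≫ g₂)
  /-- (E1ᵒᵖ): admissible epimorphisms are closed under composition -/
  epiComp : ∀ {A B C : M} (g₁ : A ⟶ B) (g₂ : B ⟶ C),
      AdmEpi n 𝒳 g₁ → AdmEpi n 𝒳 g₂ → AdmEpi n 𝒳 (g₁ ≫ g₂)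
  /-- (E2): existence of `n`-pushouts along morphisms out of `X⁰`, with `d_Y⁰` an admissible
  monomorphism -/
  pushout : ∀ Z ∈ 𝒳, ∀ (W : M) (f0 : Z.X 0 ⟶ W),
      ∃ (T : NSeq M) (f : ∀ i, Z.X i ⟶ T.X i) (h : T.X 0 = W),
        f 0 = f0 ≫ eqToHom h.symm ∧
        (∀ i, i + 1 ≤ n → Z.d i ≫ f (i + 1) = f i ≫ T.d i) ∧
        IsNPushout n Z T f ∧ AdmMono 𝒳 (T.d 0)
  /-- (E2ᵒᵖ): existence of `n`-pullbacks along morphisms into `Y^{n+1}`, with `d_X^n` an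
  admissible epimorphism -/
  pullback : ∀ Z ∈ 𝒳, ∀ (A : M) (g : A ⟶ Z.X (n + 1)),
      ∃ (T : NSeq M) (f : ∀ i, T.X i ⟶ Z.X (i + 1)) (h : T.X n = A),
        f n = eqToHom h ≫ g ∧
        (∀ i, i + 1 ≤ n → T.d i ≫ f (i + 1) = f i ≫ Z.d (i + 1)) ∧
        IsNPullback n T Z.shift f ∧ AdmEpi n 𝒳 (T.d (n - 1))

end NExactCat

namespace NExactCat

variable {M : Type u} [SmallCategory M] [Preadditive M] [HasFiniteBiproducts M]

/-- A functor `F ∈ Mod(M)` is weakly effaceable if every element of `F(X)` is killed by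
restriction along some admissible epimorphism `V ⟶ X`. -/
def WeaklyEffaceable (n : ℕ) (𝒳 : Set (NSeq M)) (F : Mᵒᵖ ⥤ AddCommGrpCat.{u}) : Prop :=
  ∀ (X : M) (x : F.obj (op X)), ∃ (V : M) (g : V ⟶ X),
    AdmEpi n 𝒳 g ∧ F.map g.op x = 0

/-- A functor `F ∈ Mod(M)` is `Eff`-closed (lies in `L₁(M)`) if for every admissible `n`-exact
sequence `Z` the sequence `0 → F(Z^{n+1}) → F(Zⁿ) → F(Z^{n-1})` of abelian groups is exact. -/
def EffClosed (n : ℕ) (𝒳 : Set (NSeq M)) (F : Mᵒᵖ ⥤ AddCommGrpCat.{u}) : Prop :=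
  ∀ Z ∈ 𝒳, ∀ j : ℕ, j + 1 = n →
    Function.Injective (fun x : F.obj (op (Z.X (n + 1))) => F.map (Z.d n).op x) ∧
    Function.Exact (fun x : F.obj (op (Z.X (j + 2))) => F.map (Z.d (j + 1)).op x)
      (fun x : F.obj (op (Z.X (j + 1))) => F.map (Z.d j).op x)

/-- A complex `0 → H_A → F¹ → ⋯ → Fⁿ → H_B → 0` in `Mod(M)` whose end terms are the
representable functors of `A` and `B`. -/
structure RepSeq (M : Type u) [SmallCategory M] [Preadditive M] (n : ℕ) (A B : M) where
  F : ℕ → (Mᵒᵖ ⥤ AddCommGrpCat.{u})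
  τ : ∀ i, F i ⟶ F (i + 1)
  hF0 : F 0 = preadditiveYoneda.obj A
  hFtop : F (n + 1) = preadditiveYoneda.obj B
  isComplex : ∀ i, i + 1 ≤ n → τ i ≫ τ (i + 1) = 0

/-- Every homology object of the complex `0 → F 0 → ⋯ → F (n+1) → 0` (homology being
computed objectwise, as in the functor category `Mod(M)`) is weakly effaceable. -/
def RepSeq.HomologyWeaklyEffaceable {n : ℕ} {A B : M} (𝒳 : Set (NSeq M))
    (S : RepSeq M n A B) : Prop :=
  (∀ (X : M) (x : (S.F 0).obj (op X)), (S.τ 0).app (op X) x = 0 →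
    ∃ (V : M) (g : V ⟶ X), AdmEpi n 𝒳 g ∧ (S.F 0).map g.op x = 0) ∧
  (∀ i, i + 1 ≤ n → ∀ (X : M) (x : (S.F (i + 1)).obj (op X)),
    (S.τ (i + 1)).app (op X) x = 0 →
    ∃ (V : M) (g : V ⟶ X), AdmEpi n 𝒳 g ∧
      ∃ y : (S.F i).obj (op V), (S.τ i).app (op V) y = (S.F (i + 1)).map g.op x) ∧
  (∀ (X : M) (x : (S.F (n + 1)).obj (op X)),
    ∃ (V : M) (g : V ⟶ X), AdmEpi n 𝒳 g ∧
      ∃ y : (S.F n).obj (op V), (S.τ n).app (op V) y = (S.F (n + 1)).map g.op x)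

/-- `S` is an `n`-fold extension of `H_B` by `H_A` in the localization of `Mod(M)` at the
weakly effaceable functors: its middle terms are additive and `Eff`-closed, and every homology
object of `S` is weakly effaceable. -/
def RepSeq.Good {n : ℕ} {A B : M} (𝒳 : Set (NSeq M)) (S : RepSeq M n A B) : Prop :=
  (∀ i, 1 ≤ i → i ≤ n → (S.F i).Additive ∧ EffClosed n 𝒳 (S.F i)) ∧
  S.HomologyWeaklyEffaceable 𝒳

/-- A morphism of such complexes restricting to the identity on the two end terms. -/
def RepSeqConnects {n : ℕ} {A B : M} (S T : RepSeq M n A B) : Prop :=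
  ∃ φ : ∀ i, S.F i ⟶ T.F i,
    (∀ i, i ≤ n → S.τ i ≫ φ (i + 1) = φ i ≫ T.τ i) ∧
    φ 0 = eqToHom (S.hF0.trans T.hF0.symm) ∧
    φ (n + 1) = eqToHom (S.hFtop.trans T.hFtop.symm)

/-- One step of the zigzag: both complexes are of the required form and there is a morphism
between them (in either direction) restricting to the identity on the end terms. -/
def RepSeqStep {n : ℕ} {A B : M} (𝒳 : Set (NSeq M)) (S T : RepSeq M n A B) : Prop :=
  S.Good 𝒳 ∧ T.Good 𝒳 ∧ (RepSeqConnects S T ∨ RepSeqConnects T S)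

/-- The complex `0 → H_{Z⁰} → H_{Z¹} → ⋯ → H_{Z^{n+1}} → 0` of representable functors
associated with a complex `Z` in `M`. -/
def repSeqOf (n : ℕ) (Z : NSeq M) {A B : M} (h0 : Z.X 0 = A) (htop : Z.X (n + 1) = B)
    (hcx : Z.IsComplex n) : RepSeq M n A B where
  F i := preadditiveYoneda.obj (Z.X i)
  τ i := preadditiveYoneda.map (Z.d i)
  hF0 := by show preadditiveYoneda.obj (Z.X 0) = _; rw [h0]
  hFtop := by show preadditiveYoneda.obj (Z.X (n + 1)) = _; rw [htop]
  isComplex i hi := by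
    rw [← Functor.map_comp, hcx i hi]
    exact Functor.map_zero _ _ _

end NExactCat

namespace NExactCat

/-!
Exactness at each spot can be tested after an admissible epimorphism `Zⁿ ⟶ Z^{n+1}`, and the right
exactness of `Z` then corrects a local preimage to a global one; hence `Y` is left `n`-exact.
Effaceability at `Y^{n+1}` gives an admissible sequence `Z` whose last differential factors through
`Yⁿ ⟶ Y^{n+1} ≅ Z^{n+1}`, and left exactness of `Y` extends this to a morphism `Z ⟶ Y`. The pushout
of `Z` along `Z⁰ ⟶ Y⁰` is an admissible sequence `S`, with a morphism `S ⟶ Y` invertible at both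
ends.

It remains to see that `Y` is right `n`-exact. Comparing null-homotopies at the two ends of the
sequences shows that `Yⁿ ⟶ Y^{n+1} ≅ S^{n+1}` factors through `Sⁿ`. This gives a morphism `Y ⟶ S`
exhibiting `Y` as a retract of `S` up to homotopy, and `S ⟶ Y` is then a weak isomorphism.
-/

/-! ### Weak kernels and weak cokernels -/

section WeakKernels

variable {M : Type u} [SmallCategory M] [Preadditive M]

/-- `g` is a weak cokernel of `f`: every morphism killed by `f` factors, not necessarily uniquely,
through `g`. -/
def IsWeakCokernel {A B C : M} (f : A ⟶ B) (g : B ⟶ C) : Prop :=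
  ∀ W : M, Function.Exact (fun x : C ⟶ W => g ≫ x) (fun x : B ⟶ W => f ≫ x)

/-- `f` is a weak kernel of `g`: every morphism killed by `g` factors, not necessarily uniquely,
through `f`. -/
def IsWeakKernel {A B C : M} (f : A ⟶ B) (g : B ⟶ C) : Prop :=
  ∀ W : M, Function.Exact (fun x : W ⟶ A => x ≫ f) (fun x : W ⟶ B => x ≫ g)

section

variable {A B C : M} {f : A ⟶ B} {g : B ⟶ C}

theorem IsWeakCokernel.w (h : IsWeakCokernel f g) : f ≫ g = 0 :=
  (h C g).2 ⟨𝟙 C, Category.comp_id g⟩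

theorem IsWeakCokernel.exists_desc (h : IsWeakCokernel f g) {W : M} (x : B ⟶ W)
    (hx : f ≫ x = 0) : ∃ y, g ≫ y = x :=
  (h W x).1 hx

theorem IsWeakCokernel.of_exists_desc (w : f ≫ g = 0)
    (h : ∀ {W : M} (x : B ⟶ W), f ≫ x = 0 → ∃ y, g ≫ y = x) : IsWeakCokernel f g := by
  refine fun W x => ⟨h x, ?_⟩
  rintro ⟨y, rfl⟩
  simp only [reassoc_of% w, zero_comp]

theorem IsWeakCokernel.of_iso (h : IsWeakCokernel f g) {A' B' C' : M} (a : A' ≅ A) (b : B' ≅ B)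
    (c : C' ≅ C) : IsWeakCokernel (a.hom ≫ f ≫ b.inv) (b.hom ≫ g ≫ c.inv) := by
  refine .of_exists_desc (by simp [reassoc_of% h.w]) fun x hx => ?_
  obtain ⟨y, hy⟩ := h.exists_desc (b.inv ≫ x) (by simpa using hx)
  exact ⟨c.hom ≫ y, by simp [hy]⟩

theorem IsWeakKernel.w (h : IsWeakKernel f g) : f ≫ g = 0 :=
  (h A f).2 ⟨𝟙 A, Category.id_comp f⟩

theorem IsWeakKernel.exists_lift (h : IsWeakKernel f g) {W : M} (x : W ⟶ B)
    (hx : x ≫ g = 0) : ∃ y, y ≫ f = x :=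
  (h W x).1 hx

theorem IsWeakKernel.of_exists_lift (w : f ≫ g = 0)
    (h : ∀ {W : M} (x : W ⟶ B), x ≫ g = 0 → ∃ y, y ≫ f = x) : IsWeakKernel f g := by
  refine fun W x => ⟨h x, ?_⟩
  rintro ⟨y, rfl⟩
  simp only [Category.assoc, w, comp_zero]

end

variable {n : ℕ} {S : NSeq M}

theorem rightNExact_iff :
    RightNExact n S ↔ Epi (S.d n) ∧ ∀ i < n, IsWeakCokernel (S.d i) (S.d (i + 1)) :=
  ⟨fun h => ⟨⟨fun _ _ hxy => h.1 _ hxy⟩, fun i hi W => h.2 W i hi⟩,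
    fun ⟨_, h⟩ => ⟨fun _ _ _ hxy => (cancel_epi (S.d n)).1 hxy, fun W i hi => h i hi W⟩⟩

theorem leftNExact_iff :
    LeftNExact n S ↔ Mono (S.d 0) ∧ ∀ i < n, IsWeakKernel (S.d i) (S.d (i + 1)) :=
  ⟨fun h => ⟨⟨fun _ _ hxy => h.1 _ hxy⟩, fun i hi W => h.2 W i hi⟩,
    fun ⟨_, h⟩ => ⟨fun _ _ _ hxy => (cancel_mono (S.d 0)).1 hxy, fun W i hi => h i hi W⟩⟩

theorem RightNExact.epi (hS : RightNExact n S) : Epi (S.d n) :=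
  (rightNExact_iff.1 hS).1

theorem RightNExact.isWeakCokernel (hS : RightNExact n S) {i : ℕ} (hi : i < n) :
    IsWeakCokernel (S.d i) (S.d (i + 1)) :=
  (rightNExact_iff.1 hS).2 i hi

theorem RightNExact.isComplex (hS : RightNExact n S) : S.IsComplex n :=
  fun _ hi => (hS.isWeakCokernel hi).w

theorem LeftNExact.mono (hS : LeftNExact n S) : Mono (S.d 0) :=
  (leftNExact_iff.1 hS).1

theorem LeftNExact.isWeakKernel (hS : LeftNExact n S) {i : ℕ} (hi : i < n) :
    IsWeakKernel (S.d i) (S.d (i + 1)) :=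
  (leftNExact_iff.1 hS).2 i hi

theorem LeftNExact.isComplex (hS : LeftNExact n S) : S.IsComplex n :=
  fun _ hi => (hS.isWeakKernel hi).w

theorem LeftNExact.of_succ (hS : LeftNExact (n + 1) S) : LeftNExact n S :=
  ⟨hS.1, fun W i hi => hS.2 W i (hi.trans n.lt_succ_self)⟩

theorem LeftNExact.succ (hS : LeftNExact n S) (h : IsWeakKernel (S.d n) (S.d (n + 1))) :
    LeftNExact (n + 1) S := by
  refine leftNExact_iff.2 ⟨hS.mono, fun i hi => ?_⟩
  rcases (Nat.lt_succ_iff.1 hi).eq_or_lt with rfl | hi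
  · exact h
  · exact hS.isWeakKernel hi

end WeakKernels

/-! ### Extending morphisms along exact sequences -/

section Hom

variable {M : Type u} [SmallCategory M]

theorem IsNSeqHom.id {n : ℕ} {S : NSeq M} : IsNSeqHom n S S (fun i => 𝟙 (S.X i)) := fun i _ => by
  rw [Category.comp_id, Category.id_comp]

theorem IsNSeqHom.comp {n : ℕ} {S T U : NSeq M} {φ : ∀ i, S.X i ⟶ T.X i}
    {ψ : ∀ i, T.X i ⟶ U.X i} (hφ : IsNSeqHom n S T φ) (hψ : IsNSeqHom n T U ψ) :
    IsNSeqHom n S U (fun i => φ i ≫ ψ i) := fun i hi => by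
  rw [reassoc_of% (hφ i hi), hψ i hi, Category.assoc]

variable [Preadditive M] {n : ℕ} {S T : NSeq M}

theorem IsNSeqHom.sub {φ ψ : ∀ i, S.X i ⟶ T.X i} (hφ : IsNSeqHom n S T φ)
    (hψ : IsNSeqHom n S T ψ) : IsNSeqHom n S T (fun i => φ i - ψ i) := fun i hi => by
  rw [Preadditive.comp_sub, Preadditive.sub_comp, hφ i hi, hψ i hi]

theorem LeftNExact.exists_hom (hS : S.IsComplex n) (hT : LeftNExact n T)
    (a : S.X n ⟶ T.X n) (b : S.X (n + 1) ⟶ T.X (n + 1)) (hab : S.d n ≫ b = a ≫ T.d n) :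
    ∃ φ : ∀ i, S.X i ⟶ T.X i, IsNSeqHom n S T φ ∧ φ n = a ∧ φ (n + 1) = b := by
  suffices H : ∀ j, j ≤ n → ∃ φ : ∀ i, S.X i ⟶ T.X i,
      (∀ i, j ≤ i → i ≤ n → S.d i ≫ φ (i + 1) = φ i ≫ T.d i) ∧ φ n = a ∧ φ (n + 1) = b by
    obtain ⟨φ, h, h'⟩ := H 0 (Nat.zero_le _)
    exact ⟨φ, fun i hi => h i (Nat.zero_le _) hi, h'⟩
  intro j hj
  induction hj using Nat.decreasingInduction with
  | self =>
    refine ⟨Function.update (Function.update (fun _ => 0) n a) (n + 1) b, fun i h₁ h₂ => ?_, ?_⟩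
    · obtain rfl : n = i := le_antisymm h₁ h₂
      simpa using hab
    · simp
  | of_succ j hj ih =>
    obtain ⟨φ, h, ha, hb⟩ := ih
    obtain ⟨y, hy⟩ := (hT.isWeakKernel hj).exists_lift (S.d j ≫ φ (j + 1)) (by
      rw [Category.assoc, ← h (j + 1) le_rfl hj, reassoc_of% (hS j hj), zero_comp])
    refine ⟨Function.update φ j y, fun i h₁ h₂ => ?_, ?_, ?_⟩
    · rcases h₁.eq_or_lt with rfl | h₁
      · simp [hy]
      · rw [Function.update_of_ne (by omega), Function.update_of_ne (by omega), h i h₁ h₂]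
    · rw [Function.update_of_ne (by omega), ha]
    · rw [Function.update_of_ne (by omega), hb]

theorem RightNExact.exists_hom (hS : RightNExact n S) (hT : T.IsComplex n)
    (a : S.X 0 ⟶ T.X 0) (b : S.X 1 ⟶ T.X 1) (hab : S.d 0 ≫ b = a ≫ T.d 0) :
    ∃ φ : ∀ i, S.X i ⟶ T.X i, IsNSeqHom n S T φ ∧ φ 0 = a ∧ φ 1 = b := by
  suffices H : ∀ j, j ≤ n → ∃ φ : ∀ i, S.X i ⟶ T.X i,
      (∀ i, i ≤ j → S.d i ≫ φ (i + 1) = φ i ≫ T.d i) ∧ φ 0 = a ∧ φ 1 = b from H n le_rfl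
  intro j hj
  induction j with
  | zero =>
    refine ⟨Function.update (Function.update (fun _ => 0) 0 a) 1 b, fun i hi => ?_, ?_⟩
    · obtain rfl : i = 0 := Nat.le_zero.1 hi
      simpa using hab
    · simp
  | succ j ih =>
    obtain ⟨φ, h, ha, hb⟩ := ih (by omega)
    obtain ⟨y, hy⟩ := (hS.isWeakCokernel hj).exists_desc (φ (j + 1) ≫ T.d (j + 1)) (by
      rw [reassoc_of% (h j le_rfl), hT j hj, comp_zero])
    refine ⟨Function.update φ (j + 2) y, fun i hi => ?_, ?_, ?_⟩
    · rcases hi.eq_or_lt with rfl | hi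
      · simp [hy]
      · rw [Function.update_of_ne (by omega), Function.update_of_ne (by omega), h i (by omega)]
    · rw [Function.update_of_ne (by omega), ha]
    · rw [Function.update_of_ne (by omega), hb]

end Hom

/-! ### Homotopies -/

section Homotopy

variable {M : Type u} [SmallCategory M] [Preadditive M] {n : ℕ} {S T U : NSeq M}

/-- The family `h` is a null-homotopy of the family `χ : S ⟶ T` in degrees `0, …, n+1`. The
component `h i` has source in degree `i + 1`. -/
structure IsNullHomotopy (n : ℕ) (S T : NSeq M) (χ : ∀ i, S.X i ⟶ T.X i)
    (h : ∀ i, S.X (i + 1) ⟶ T.X i) : Prop where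
  bot : χ 0 = S.d 0 ≫ h 0
  mid : ∀ i < n, χ (i + 1) = S.d (i + 1) ≫ h (i + 1) + h i ≫ T.d i
  top : χ (n + 1) = h n ≫ T.d n

theorem LeftNExact.exists_nullHomotopy (hS : S.IsComplex n) (hT : LeftNExact n T)
    {χ : ∀ i, S.X i ⟶ T.X i} (hχ : IsNSeqHom n S T χ) (s : S.X (n + 1) ⟶ T.X n)
    (hs : χ (n + 1) = s ≫ T.d n) : ∃ h, IsNullHomotopy n S T χ h := by
  have sub_comp_d {h : ∀ i, S.X (i + 1) ⟶ T.X i} {j : ℕ} (hj : j ≤ n)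
      (mid : ∀ i, j ≤ i → i < n → χ (i + 1) = S.d (i + 1) ≫ h (i + 1) + h i ≫ T.d i)
      (top : χ (n + 1) = h n ≫ T.d n) : (χ j - S.d j ≫ h j) ≫ T.d j = 0 := by
    rw [Preadditive.sub_comp, ← hχ j hj, Category.assoc, ← Preadditive.comp_sub]
    rcases hj.eq_or_lt with rfl | hj
    · rw [top, sub_self, comp_zero]
    · rw [mid j le_rfl hj, add_sub_cancel_right, reassoc_of% (hS j hj), zero_comp]
  suffices H : ∀ j, j ≤ n → ∃ h : ∀ i, S.X (i + 1) ⟶ T.X i,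
      (∀ i, j ≤ i → i < n → χ (i + 1) = S.d (i + 1) ≫ h (i + 1) + h i ≫ T.d i) ∧
      χ (n + 1) = h n ≫ T.d n by
    obtain ⟨h, mid, top⟩ := H 0 (Nat.zero_le _)
    have := hT.mono
    have bot := sub_comp_d (Nat.zero_le _) mid top
    exact ⟨h, sub_eq_zero.1 (zero_of_comp_mono _ bot), fun i => mid i (Nat.zero_le _), top⟩
  intro j hj
  induction hj using Nat.decreasingInduction with
  | self => exact ⟨Function.update (fun _ => 0) n s, fun i h₁ h₂ => by omega, by simp [hs]⟩
  | of_succ j hj ih =>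
    obtain ⟨h, mid, top⟩ := ih
    obtain ⟨y, hy⟩ := (hT.isWeakKernel hj).exists_lift _ (sub_comp_d hj mid top)
    refine ⟨Function.update h j y, fun i h₁ h₂ => ?_, ?_⟩
    · rcases h₁.eq_or_lt with rfl | h₁
      · simp [hy]
      · rw [Function.update_of_ne (by omega), Function.update_of_ne (by omega), mid i h₁ h₂]
    · rw [Function.update_of_ne (by omega), top]

theorem RightNExact.exists_nullHomotopy (hS : RightNExact n S) (hT : T.IsComplex n)
    {χ : ∀ i, S.X i ⟶ T.X i} (hχ : IsNSeqHom n S T χ) (s : S.X 1 ⟶ T.X 0)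
    (hs : χ 0 = S.d 0 ≫ s) : ∃ h, IsNullHomotopy n S T χ h := by
  have d_comp_sub {h : ∀ i, S.X (i + 1) ⟶ T.X i} {j : ℕ} (hj : j ≤ n)
      (bot : χ 0 = S.d 0 ≫ h 0)
      (mid : ∀ i < j, χ (i + 1) = S.d (i + 1) ≫ h (i + 1) + h i ≫ T.d i) :
      S.d j ≫ (χ (j + 1) - h j ≫ T.d j) = 0 := by
    rw [Preadditive.comp_sub, hχ j hj, ← Category.assoc, ← Preadditive.sub_comp]
    cases j with
    | zero => rw [bot, sub_self, zero_comp]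
    | succ k =>
      rw [mid k k.lt_succ_self, add_sub_cancel_left, Category.assoc, hT k hj, comp_zero]
  suffices H : ∀ j, j ≤ n → ∃ h : ∀ i, S.X (i + 1) ⟶ T.X i, χ 0 = S.d 0 ≫ h 0 ∧
      ∀ i < j, χ (i + 1) = S.d (i + 1) ≫ h (i + 1) + h i ≫ T.d i by
    obtain ⟨h, bot, mid⟩ := H n le_rfl
    have := hS.epi
    exact ⟨h, bot, mid, sub_eq_zero.1 (zero_of_epi_comp _ (d_comp_sub le_rfl bot mid))⟩
  intro j hj
  induction j with
  | zero => exact ⟨Function.update (fun _ => 0) 0 s, by simp [hs], fun i hi => by omega⟩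
  | succ j ih =>
    obtain ⟨h, bot, mid⟩ := ih (by omega)
    obtain ⟨y, hy⟩ :=
      (hS.isWeakCokernel hj).exists_desc _ (d_comp_sub (Nat.le_of_succ_le hj) bot mid)
    refine ⟨Function.update h (j + 1) y, ?_, fun i hi => ?_⟩
    · rw [Function.update_of_ne (by omega), bot]
    · rcases (Nat.lt_succ_iff.1 hi).eq_or_lt with rfl | hi
      · simp [hy]
      · rw [Function.update_of_ne (by omega), Function.update_of_ne (by omega), mid i hi]

theorem LeftNExact.of_homotopy_retract (hU : LeftNExact n U) (hS : S.IsComplex n)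
    {φ : ∀ i, S.X i ⟶ U.X i} {ψ : ∀ i, U.X i ⟶ S.X i} (hφ : IsNSeqHom n S U φ)
    (hψ : IsNSeqHom n U S ψ) {h : ∀ i, S.X (i + 1) ⟶ S.X i}
    (hh : IsNullHomotopy n S S (fun i => 𝟙 _ - φ i ≫ ψ i) h) : LeftNExact n S := by
  refine leftNExact_iff.2 ⟨Preadditive.mono_of_cancel_zero _ fun x hx => ?_,
    fun i hi => .of_exists_lift (hS i hi) fun x hx => ?_⟩
  · have := hU.mono
    have hxφ : x ≫ φ 0 = 0 := zero_of_comp_mono (U.d 0) (by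
      rw [Category.assoc, ← hφ 0 (Nat.zero_le _), reassoc_of% hx, zero_comp])
    simpa [reassoc_of% hxφ, reassoc_of% hx] using x ≫= hh.bot
  · obtain ⟨y, hy⟩ := (hU.isWeakKernel hi).exists_lift (x ≫ φ (i + 1)) (by
      rw [Category.assoc, ← hφ (i + 1) hi, reassoc_of% hx, zero_comp])
    have hxh : x - x ≫ φ (i + 1) ≫ ψ (i + 1) = x ≫ h i ≫ S.d i := by
      simpa [reassoc_of% hx] using x ≫= hh.mid i hi
    refine ⟨y ≫ ψ i + x ≫ h i, ?_⟩
    rw [Preadditive.add_comp, Category.assoc, Category.assoc, ← hxh, ← hψ i hi.le,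
      reassoc_of% hy, add_sub_cancel]

theorem RightNExact.of_homotopy_retract (hU : RightNExact n U) (hS : S.IsComplex n)
    {φ : ∀ i, S.X i ⟶ U.X i} {ψ : ∀ i, U.X i ⟶ S.X i} (hφ : IsNSeqHom n S U φ)
    (hψ : IsNSeqHom n U S ψ) {h : ∀ i, S.X (i + 1) ⟶ S.X i}
    (hh : IsNullHomotopy n S S (fun i => 𝟙 _ - φ i ≫ ψ i) h) : RightNExact n S := by
  refine rightNExact_iff.2 ⟨Preadditive.epi_of_cancel_zero _ fun x hx => ?_,
    fun i hi => .of_exists_desc (hS i hi) fun x hx => ?_⟩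
  · have := hU.epi
    have hψx : ψ (n + 1) ≫ x = 0 := zero_of_epi_comp (U.d n) (by
      rw [reassoc_of% (hψ n le_rfl), hx, comp_zero])
    simpa [hψx, hx] using hh.top =≫ x
  · obtain ⟨y, hy⟩ := (hU.isWeakCokernel hi).exists_desc (ψ (i + 1) ≫ x) (by
      rw [reassoc_of% (hψ i hi.le), hx, comp_zero])
    have hhx : x - φ (i + 1) ≫ ψ (i + 1) ≫ x = S.d (i + 1) ≫ h (i + 1) ≫ x := by
      simpa [hx] using hh.mid i hi =≫ x
    refine ⟨φ (i + 2) ≫ y + h (i + 1) ≫ x, ?_⟩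
    rw [Preadditive.comp_add, ← hhx, reassoc_of% (hφ (i + 1) hi), hy, add_sub_cancel]

theorem IsNSeqHom.exists_hom_last_eq_sub (hS : S.IsComplex n) {φ : ∀ i, S.X i ⟶ T.X i}
    (hφ : IsNSeqHom n S T φ) (s : S.X (n + 1) ⟶ T.X n) :
    ∃ ψ : ∀ i, S.X i ⟶ T.X i, IsNSeqHom n S T ψ ∧ (∀ i < n, ψ i = φ i) ∧
      ψ (n + 1) = φ (n + 1) - s ≫ T.d n := by
  refine ⟨Function.update (Function.update φ n (φ n - S.d n ≫ s)) (n + 1)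
    (φ (n + 1) - s ≫ T.d n), fun i hi => ?_, fun i hi => ?_, by simp⟩
  · rcases hi.eq_or_lt with rfl | hi
    · simp [hφ i le_rfl]
    rcases (Nat.succ_le_of_lt hi).eq_or_lt with rfl | hi'
    · rw [Function.update_of_ne (by omega : i ≠ i + 1 + 1), Function.update_of_ne (by omega)]
      simp [hφ i hi.le, reassoc_of% (hS i le_rfl)]
    · rw [Function.update_of_ne (by omega), Function.update_of_ne (by omega),
        Function.update_of_ne (by omega), Function.update_of_ne (by omega), hφ i hi.le]
  · rw [Function.update_of_ne (by omega), Function.update_of_ne (by omega)]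

theorem RightNExact.exists_hom_comp_last_eq {Z Y : NSeq M} (hn : 1 ≤ n) (hZ : RightNExact n Z)
    (hS : S.IsComplex n) (hY : Y.IsComplex n) {φ : ∀ i, Z.X i ⟶ S.X i}
    {ψ : ∀ i, S.X i ⟶ Y.X i} {ρ : ∀ i, Z.X i ⟶ Y.X i} (hφ : IsNSeqHom n Z S φ)
    (hψ : IsNSeqHom n S Y ψ) (hρ : IsNSeqHom n Z Y ρ) (h0 : φ 0 ≫ ψ 0 = ρ 0)
    [IsIso (φ (n + 1))] :
    ∃ ψ' : ∀ i, S.X i ⟶ Y.X i, IsNSeqHom n S Y ψ' ∧ ψ' 0 = ψ 0 ∧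
      φ (n + 1) ≫ ψ' (n + 1) = ρ (n + 1) := by
  obtain ⟨h, hh⟩ := hZ.exists_nullHomotopy hY ((hφ.comp hψ).sub hρ) 0 (by simp [h0])
  obtain ⟨ψ', hψ', hψ'_eq, hψ'_last⟩ :=
    hψ.exists_hom_last_eq_sub hS (inv (φ (n + 1)) ≫ h n)
  refine ⟨ψ', hψ', hψ'_eq 0 hn, ?_⟩
  rw [hψ'_last, Preadditive.comp_sub, Category.assoc, IsIso.hom_inv_id_assoc, ← hh.top,
    sub_sub_cancel]

end Homotopy

/-! ### Pushouts -/

section Pushout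

variable {M : Type u} [SmallCategory M] [Preadditive M] [HasFiniteBiproducts M] {n : ℕ}
  {S T : NSeq M} {f : ∀ i, S.X i ⟶ T.X i}

theorem coneX_succ {i : ℕ} (hi : i + 1 ≤ n) :
    coneX n S T (i + 1) = (S.X (i + 1) ⊞ T.X i) :=
  coneX_mid n S T i.succ_ne_zero hi

theorem coneX_last : coneX n S T (n + 1) = T.X n :=
  coneX_top n S T n.lt_succ_self

theorem coneD_zero (hn : 1 ≤ n) : coneD n S T f 0 = eqToHom (coneX_zero n S T) ≫
    biprod.lift (-(S.d 0)) (f 0) ≫ eqToHom (coneX_succ hn).symm := by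
  simp [coneD, hn]

theorem coneD_succ {i : ℕ} (hi : i + 2 ≤ n) :
    coneD n S T f (i + 1) = eqToHom (coneX_succ (Nat.le_of_succ_le hi)) ≫
      biprod.lift (biprod.fst ≫ (-(S.d (i + 1))))
        (biprod.fst ≫ f (i + 1) + biprod.snd ≫ T.d i) ≫
      eqToHom (coneX_succ hi).symm := by
  simp [coneD, hi]

theorem coneD_last {m : ℕ} : coneD (m + 1) S T f (m + 1) =
    eqToHom (coneX_succ le_rfl) ≫ biprod.desc (f (m + 1)) (T.d m) ≫ eqToHom coneX_last.symm := by
  simp [coneD]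

variable (n S T) in
/-- The inclusion of `X^{i+1}` into the term of degree `i + 1` of the mapping cone; it is zero in
degrees `> n`, where the cone has no such summand. -/
noncomputable def coneInl (i : ℕ) : S.X (i + 1) ⟶ coneX n S T (i + 1) :=
  if h : i + 1 ≤ n then biprod.inl ≫ eqToHom (coneX_succ h).symm else 0

variable (n S T) in
/-- The inclusion of `Y^i` into the term of degree `i + 1` of the mapping cone; it is an isomorphism
for `i = n` and, by convention, zero for `i > n`. -/
noncomputable def coneInr (i : ℕ) : T.X i ⟶ coneX n S T (i + 1) :=
  if h : i + 1 ≤ n then biprod.inr ≫ eqToHom (coneX_succ h).symm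
  else if h : i = n then eqToHom (by rw [h, coneX_last]) else 0

theorem coneInl_last : coneInl n S T n = 0 :=
  dif_neg (by omega)

theorem coneInr_last : coneInr n S T n = eqToHom coneX_last.symm := by
  simp [coneInr]

theorem exists_coneInl_comp_eq {i : ℕ} (hi : i + 1 ≤ n) {W : M} (y : S.X (i + 1) ⟶ W)
    (x : T.X i ⟶ W) : ∃ z, coneInl n S T i ≫ z = y ∧ coneInr n S T i ≫ z = x :=
  ⟨eqToHom (coneX_succ hi) ≫ biprod.desc y x, by simp [coneInl, hi], by simp [coneInr, hi]⟩

theorem exists_coneInr_comp_eq {i : ℕ} (hi : i ≤ n) {W : M} (x : T.X i ⟶ W) :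
    ∃ z, coneInr n S T i ≫ z = x := by
  rcases hi.eq_or_lt with rfl | hi
  · exact ⟨eqToHom coneX_last ≫ x, by simp [coneInr_last]⟩
  · exact (exists_coneInl_comp_eq hi 0 x).imp fun _ => And.right

theorem cone_hom_ext {i : ℕ} (hi : i ≤ n) {W : M} {z z' : coneX n S T (i + 1) ⟶ W}
    (hl : coneInl n S T i ≫ z = coneInl n S T i ≫ z')
    (hr : coneInr n S T i ≫ z = coneInr n S T i ≫ z') : z = z' := by
  rcases hi.eq_or_lt with rfl | hi
  · rwa [coneInr_last, cancel_epi] at hr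
  · rw [← cancel_epi (eqToHom (coneX_succ hi).symm)]
    ext
    · simpa [coneInl, Nat.succ_le_of_lt hi] using hl
    · simpa [coneInr, Nat.succ_le_of_lt hi] using hr

theorem coneD_zero_comp_eq_zero_iff (hn : 1 ≤ n) {W : M} {z : coneX n S T 1 ⟶ W} :
    coneD n S T f 0 ≫ z = 0 ↔ S.d 0 ≫ coneInl n S T 0 ≫ z = f 0 ≫ coneInr n S T 0 ≫ z := by
  rw [coneD_zero hn, Category.assoc, ← cancel_epi (eqToHom (coneX_zero n S T).symm)]
  simp [biprod.lift_eq, coneInl, coneInr, hn, neg_add_eq_zero]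

variable (S T f) in
theorem coneInl_coneD {i : ℕ} (hi : i + 1 ≤ n) :
    coneInl n S T i ≫ coneD n S T f (i + 1) =
      f (i + 1) ≫ coneInr n S T (i + 1) - S.d (i + 1) ≫ coneInl n S T (i + 1) := by
  rcases hi.eq_or_lt with rfl | hi
  · simp [coneD_last, coneInl, coneInr_last]
  · simp [coneD_succ hi, coneInl, coneInr, biprod.lift_eq, Nat.le_of_succ_le hi,
      Nat.succ_le_of_lt hi, sub_eq_neg_add]

variable (S T f) in
theorem coneInr_coneD {i : ℕ} (hi : i + 1 ≤ n) :
    coneInr n S T i ≫ coneD n S T f (i + 1) = T.d i ≫ coneInr n S T (i + 1) := by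
  rcases hi.eq_or_lt with rfl | hi
  · simp [coneD_last, coneInr]
  · simp [coneD_succ hi, coneInr, biprod.lift_eq, Nat.le_of_succ_le hi, Nat.succ_le_of_lt hi]

theorem coneD_succ_comp_eq_zero {i : ℕ} (hi : i + 1 ≤ n) {W : M}
    {z : coneX n S T (i + 2) ⟶ W}
    (hl : S.d (i + 1) ≫ coneInl n S T (i + 1) ≫ z = f (i + 1) ≫ coneInr n S T (i + 1) ≫ z)
    (hr : T.d i ≫ coneInr n S T (i + 1) ≫ z = 0) : coneD n S T f (i + 1) ≫ z = 0 := by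
  refine cone_hom_ext (Nat.le_of_succ_le hi) ?_ ?_
  · rw [reassoc_of% (coneInl_coneD S T f hi), Preadditive.sub_comp, Category.assoc,
      Category.assoc, hl, sub_self, comp_zero]
  · rw [reassoc_of% (coneInr_coneD S T f hi), hr, comp_zero]

theorem IsNPushout.exists_desc (hp : IsNPushout n S T f) {i : ℕ} (hi : i + 1 ≤ n) {W : M}
    {z : coneX n S T (i + 1) ⟶ W} (hz : coneD n S T f i ≫ z = 0) :
    ∃ w : coneX n S T (i + 2) ⟶ W,
      f (i + 1) ≫ coneInr n S T (i + 1) ≫ w - S.d (i + 1) ≫ coneInl n S T (i + 1) ≫ w =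
        coneInl n S T i ≫ z ∧
      T.d i ≫ coneInr n S T (i + 1) ≫ w = coneInr n S T i ≫ z := by
  obtain ⟨w, rfl⟩ : ∃ w, coneD n S T f (i + 1) ≫ w = z :=
    (RightNExact.isWeakCokernel hp hi).exists_desc z hz
  refine ⟨w, ?_, ?_⟩
  · rw [reassoc_of% (coneInl_coneD S T f hi), Preadditive.sub_comp, Category.assoc,
      Category.assoc]
  · rw [reassoc_of% (coneInr_coneD S T f hi)]

theorem IsNPushout.exists_desc_zero (hp : IsNPushout n S T f) (hn : 1 ≤ n) {W : M}
    (y : S.X 1 ⟶ W) (x : T.X 0 ⟶ W) (hxy : S.d 0 ≫ y = f 0 ≫ x) : ∃ b, T.d 0 ≫ b = x := by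
  obtain ⟨z, rfl, rfl⟩ := exists_coneInl_comp_eq hn y x
  obtain ⟨w, -, hw⟩ := hp.exists_desc hn ((coneD_zero_comp_eq_zero_iff hn).2 hxy)
  exact ⟨_, hw⟩

theorem IsNPushout.d_comp_d (hp : IsNPushout n S T f) {i : ℕ} (hi : i + 2 ≤ n) :
    T.d i ≫ T.d (i + 1) = 0 := by
  have hD : coneD n S T f (i + 1) ≫ coneD n S T f (i + 2) = 0 := RightNExact.isComplex hp _ hi
  obtain ⟨r, hr⟩ := exists_coneInr_comp_eq (S := S) (T := T) hi (𝟙 _)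
  have h := coneInr n S T i ≫= hD =≫ r
  rwa [zero_comp, comp_zero, Category.assoc,
    reassoc_of% (coneInr_coneD S T f (Nat.le_of_succ_le hi)),
    reassoc_of% (coneInr_coneD S T f hi), hr, Category.comp_id] at h

theorem IsNPushout.isWeakCokernel (hp : IsNPushout n S T f) (hS : RightNExact n S)
    (hf : ∀ i, i + 1 ≤ n → S.d i ≫ f (i + 1) = f i ≫ T.d i) {i : ℕ} (hi : i + 2 ≤ n) :
    IsWeakCokernel (T.d i) (T.d (i + 1)) := by
  refine .of_exists_desc (hp.d_comp_d hi) fun x hx => ?_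
  have hi' : i + 1 ≤ n := Nat.le_of_succ_le hi
  obtain ⟨y, hy⟩ := (hS.isWeakCokernel hi').exists_desc (f (i + 1) ≫ x) (by
    rw [reassoc_of% (hf i hi'), hx, comp_zero])
  obtain ⟨z, rfl, rfl⟩ := exists_coneInl_comp_eq hi y x
  obtain ⟨w, -, hw⟩ := hp.exists_desc hi (coneD_succ_comp_eq_zero hi' hy hx)
  exact ⟨_, hw⟩

section Last

variable {m : ℕ}

theorem IsNPushout.hom_ext_last (hp : IsNPushout (m + 1) S T f) {W : M} {x x' : T.X (m + 1) ⟶ W}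
    (h₁ : f (m + 1) ≫ x = f (m + 1) ≫ x') (h₂ : T.d m ≫ x = T.d m ≫ x') : x = x' := by
  have : Epi (coneD (m + 1) S T f (m + 1)) := RightNExact.epi hp
  obtain ⟨z, rfl⟩ := exists_coneInr_comp_eq (S := S) le_rfl x
  obtain ⟨z', rfl⟩ := exists_coneInr_comp_eq (S := S) le_rfl x'
  suffices z = z' by rw [this]
  rw [← cancel_epi (coneD (m + 1) S T f (m + 1))]
  refine cone_hom_ext m.le_succ ?_ ?_
  · simpa [reassoc_of% (coneInl_coneD S T f (le_refl (m + 1))), coneInl_last] using h₁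
  · simpa [reassoc_of% (coneInr_coneD S T f (le_refl (m + 1)))] using h₂

theorem IsNPushout.exists_prolongation (hp : IsNPushout (m + 1) S T f) (hS : S.IsComplex (m + 1)) :
    ∃ p : T.X (m + 1) ⟶ S.X (m + 2), f (m + 1) ≫ p = S.d (m + 1) ∧ T.d m ≫ p = 0 := by
  obtain ⟨z, hl, hr⟩ :=
    exists_coneInl_comp_eq (n := m + 1) (T := T) le_rfl (S.d (m + 1)) (0 : T.X m ⟶ _)
  have hz : coneD (m + 1) S T f m ≫ z = 0 := by
    cases m with
    | zero => rw [coneD_zero_comp_eq_zero_iff le_rfl, hl, hr, hS 0 le_rfl, comp_zero]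
    | succ m =>
      exact coneD_succ_comp_eq_zero (Nat.le_succ _) (by rw [hl, hr, hS _ le_rfl, comp_zero])
        (by rw [hr, comp_zero])
  obtain ⟨w, hl', hr'⟩ := hp.exists_desc le_rfl hz
  refine ⟨coneInr (m + 1) S T (m + 1) ≫ w, ?_, by rw [hr', hr]⟩
  rwa [coneInl_last, zero_comp, comp_zero, sub_zero, hl] at hl'

theorem IsNPushout.isWeakCokernel_prolongation (hp : IsNPushout (m + 1) S T f)
    (hS : RightNExact (m + 1) S)
    (hf : S.d m ≫ f (m + 1) = f m ≫ T.d m) {p : T.X (m + 1) ⟶ S.X (m + 2)}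
    (hfp : f (m + 1) ≫ p = S.d (m + 1)) (hdp : T.d m ≫ p = 0) : IsWeakCokernel (T.d m) p := by
  refine .of_exists_desc hdp fun x hx => ?_
  obtain ⟨y, hy⟩ := (hS.isWeakCokernel m.lt_succ_self).exists_desc (f (m + 1) ≫ x) (by
    rw [reassoc_of% hf, hx, comp_zero])
  exact ⟨y, hp.hom_ext_last (by rw [reassoc_of% hfp, hy]) (by rw [reassoc_of% hdp, hx, zero_comp])⟩

end Last

end Pushout

/-! ### Prolongations -/

section Prolong

variable {M : Type u} [SmallCategory M] {n : ℕ} {T : NSeq M} {B : M}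

variable (n T) in
/-- The sequence `T⁰ → ⋯ → Tⁿ → B` obtained by replacing the term of degree `n + 1` of `T` and the
differential into it by `p : Tⁿ ⟶ B`. The terms in higher degrees, which are irrelevant, are set to
`B` as well. -/
def NSeq.prolong (p : T.X n ⟶ B) : NSeq M where
  X i := if i ≤ n then T.X i else B
  d i :=
    if h : i + 1 ≤ n then
      eqToHom (if_pos (Nat.le_of_succ_le h)) ≫ T.d i ≫ eqToHom (if_pos h).symm
    else if h' : i = n then
      eqToHom (by rw [h', if_pos le_rfl]) ≫ p ≫ eqToHom (if_neg h).symm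
    else eqToHom (by rw [if_neg (by omega), if_neg h])

variable (p : T.X n ⟶ B)

theorem NSeq.prolong_X {i : ℕ} (hi : i ≤ n) : (NSeq.prolong n T p).X i = T.X i :=
  if_pos hi

/-- The identification of the terms of degree `i ≤ n` of `NSeq.prolong n T p` with those of `T`. -/
def NSeq.prolongIso {i : ℕ} (hi : i ≤ n) : (NSeq.prolong n T p).X i ≅ T.X i :=
  eqToIso (prolong_X p hi)

/-- The identification of the last term of `NSeq.prolong n T p` with `B`. -/
def NSeq.prolongLastIso : (NSeq.prolong n T p).X (n + 1) ≅ B :=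
  eqToIso (if_neg (by omega))

theorem NSeq.prolong_d {i : ℕ} (hi : i + 1 ≤ n) : (NSeq.prolong n T p).d i =
    (prolongIso p (Nat.le_of_succ_le hi)).hom ≫ T.d i ≫ (prolongIso p hi).inv :=
  dif_pos hi

theorem NSeq.prolong_d_last : (NSeq.prolong n T p).d n =
    (prolongIso p le_rfl).hom ≫ p ≫ (prolongLastIso p).inv :=
  (dif_neg (by omega)).trans (dif_pos rfl)

variable [Preadditive M]

theorem exists_hom_prolong {Z : NSeq M} (f : ∀ i, Z.X i ⟶ T.X i)
    (hf : ∀ i, i + 1 ≤ n → Z.d i ≫ f (i + 1) = f i ≫ T.d i) (g : Z.X (n + 1) ⟶ B)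
    (hg : Z.d n ≫ g = f n ≫ p) :
    ∃ F : ∀ i, Z.X i ⟶ (NSeq.prolong n T p).X i, IsNSeqHom n Z (NSeq.prolong n T p) F ∧
      F 0 = f 0 ≫ (NSeq.prolongIso p n.zero_le).inv ∧
      F (n + 1) = g ≫ (NSeq.prolongLastIso p).inv := by
  refine ⟨Function.update (fun i => if h : i ≤ n then f i ≫ (NSeq.prolongIso p h).inv else 0)
    (n + 1) (g ≫ (NSeq.prolongLastIso p).inv), fun i hi => ?_, ?_, by simp⟩
  · rcases hi.eq_or_lt with rfl | hi'
    · simp [NSeq.prolong_d_last, reassoc_of% hg]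
    · rw [Function.update_of_ne (by omega), Function.update_of_ne (by omega), dif_pos hi,
        dif_pos (Nat.succ_le_of_lt hi'), NSeq.prolong_d p hi', reassoc_of% (hf i hi')]
      simp
  · rw [Function.update_of_ne (by omega), dif_pos n.zero_le]

theorem rightNExact_prolong {m : ℕ} {p : T.X (m + 1) ⟶ B} [Epi p]
    (hT : ∀ i, i < m → IsWeakCokernel (T.d i) (T.d (i + 1))) (hp : IsWeakCokernel (T.d m) p) :
    RightNExact (m + 1) (NSeq.prolong (m + 1) T p) := by
  refine rightNExact_iff.2 ⟨by rw [NSeq.prolong_d_last]; infer_instance, fun i hi => ?_⟩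
  rw [NSeq.prolong_d p hi]
  rcases (Nat.lt_succ_iff.1 hi).eq_or_lt with rfl | hi
  · rw [NSeq.prolong_d_last]
    exact hp.of_iso _ _ _
  · rw [NSeq.prolong_d p (Nat.succ_lt_succ hi)]
    exact (hT i hi).of_iso _ _ _

end Prolong

/-! ### Admissible sequences -/

section Admissible

variable {M : Type u} [SmallCategory M]

theorem AdmMono.prolong {n : ℕ} (hn : 1 ≤ n) {𝒳 : Set (NSeq M)} {T : NSeq M}
    (hT : AdmMono 𝒳 (T.d 0)) {B : M} (p : T.X n ⟶ B) : AdmMono 𝒳 ((NSeq.prolong n T p).d 0) := by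
  obtain ⟨Z, hZ, h0, h1, h⟩ := hT
  refine ⟨Z, hZ, h0.trans (NSeq.prolong_X p n.zero_le).symm,
    h1.trans (NSeq.prolong_X p hn).symm, ?_⟩
  simp [NSeq.prolong_d p hn, NSeq.prolongIso, h]

variable [Preadditive M] {n : ℕ}

theorem RightNExact.exists_comp_d_eq {Y Z : NSeq M} (hZ : RightNExact n Z) {i : ℕ}
    (hY : LeftNExact i Y) {k : ℕ} (hik : i ≤ k) (hk : k < n) (y : Z.X (k + 1) ⟶ Y.X i)
    (hy : Z.d k ≫ y ≫ Y.d i = 0) :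
    ∃ t : Z.X (k + 2) ⟶ Y.X i, Z.d (k + 1) ≫ t ≫ Y.d i = y ≫ Y.d i := by
  induction i generalizing k with
  | zero =>
    have := hY.mono
    obtain ⟨t, rfl⟩ := (hZ.isWeakCokernel hk).exists_desc y
      (zero_of_comp_mono (Y.d 0) (by rw [Category.assoc, hy]))
    exact ⟨t, by rw [Category.assoc]⟩
  | succ i ih =>
    obtain ⟨l, rfl⟩ := Nat.exists_eq_add_of_le' (Nat.one_le_of_lt hik)
    obtain ⟨z, hz⟩ := (hY.isWeakKernel i.lt_succ_self).exists_lift (Z.d (l + 1) ≫ y)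
      (by rw [Category.assoc, hy])
    obtain ⟨s, hs⟩ := ih hY.of_succ (Nat.le_of_succ_le_succ hik) (Nat.lt_of_succ_lt hk) z (by
      rw [hz, reassoc_of% (hZ.isComplex l hk.le), zero_comp])
    obtain ⟨t, ht⟩ := (hZ.isWeakCokernel hk).exists_desc (y - s ≫ Y.d i) (by
      rw [Preadditive.comp_sub, ← hz, ← hs]
      exact sub_self _)
    exact ⟨t, by rw [reassoc_of% ht, Preadditive.sub_comp, Category.assoc,
      hY.isComplex i le_rfl, comp_zero, sub_zero]⟩

variable {𝒳 : Set (NSeq M)}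

theorem homologyWeaklyEffaceable_repSeqOf_iff {Y : NSeq M} (hY : Y.IsComplex n) :
    (repSeqOf n Y rfl rfl hY).HomologyWeaklyEffaceable 𝒳 ↔
      (∀ (X : M) (x : X ⟶ Y.X 0), x ≫ Y.d 0 = 0 →
        ∃ (V : M) (g : V ⟶ X), AdmEpi n 𝒳 g ∧ g ≫ x = 0) ∧
      (∀ i, i + 1 ≤ n → ∀ (X : M) (x : X ⟶ Y.X (i + 1)), x ≫ Y.d (i + 1) = 0 →
        ∃ (V : M) (g : V ⟶ X), AdmEpi n 𝒳 g ∧ ∃ y : V ⟶ Y.X i, y ≫ Y.d i = g ≫ x) ∧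
      (∀ (X : M) (x : X ⟶ Y.X (n + 1)),
        ∃ (V : M) (g : V ⟶ X), AdmEpi n 𝒳 g ∧ ∃ y : V ⟶ Y.X n, y ≫ Y.d n = g ≫ x) :=
  Iff.rfl

variable [HasFiniteBiproducts M]

namespace IsNExactStructure

theorem epi_of_admEpi (h𝒳 : IsNExactStructure n 𝒳) {V X : M} {g : V ⟶ X}
    (hg : AdmEpi n 𝒳 g) : Epi g := by
  obtain ⟨Z, hZ, rfl, rfl, h⟩ := hg
  obtain rfl : Z.d n = g := by simpa using h
  exact (h𝒳.nExact Z hZ).2.2.epi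

theorem exists_hom_of_admEpi (h𝒳 : IsNExactStructure n 𝒳) {V X : M} {g : V ⟶ X}
    (hg : AdmEpi n 𝒳 g) {T : NSeq M} (hT : LeftNExact n T) (y : V ⟶ T.X n)
    (x : X ⟶ T.X (n + 1)) (hyx : g ≫ x = y ≫ T.d n) :
    ∃ Z ∈ 𝒳, ∃ φ : ∀ i, Z.X i ⟶ T.X i, IsNSeqHom n Z T φ ∧
      ∃ b : Z.X (n + 1) ≅ X, φ (n + 1) = b.hom ≫ x := by
  obtain ⟨Z, hZ, rfl, rfl, h⟩ := hg
  obtain rfl : Z.d n = g := by simpa using h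
  obtain ⟨φ, hφ, -, rfl⟩ := LeftNExact.exists_hom (h𝒳.nExact Z hZ).1 hT y x hyx
  exact ⟨Z, hZ, φ, hφ, Iso.refl _, (Category.id_comp _).symm⟩

theorem exists_lift_of_admEpi (h𝒳 : IsNExactStructure n 𝒳) {Y : NSeq M} {i : ℕ}
    (hY : LeftNExact i Y) (hi : i < n) {V X : M} {g : V ⟶ X} (hg : AdmEpi n 𝒳 g)
    (x : X ⟶ Y.X (i + 1)) (y : V ⟶ Y.X i) (hyx : y ≫ Y.d i = g ≫ x) : ∃ t, t ≫ Y.d i = x := by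
  have := h𝒳.epi_of_admEpi hg
  obtain ⟨m, rfl⟩ := Nat.exists_eq_add_of_lt hi
  obtain ⟨Z, hZ, rfl, rfl, h⟩ := hg
  obtain rfl : Z.d _ = g := by simpa using h
  have hZr := (h𝒳.nExact Z hZ).2.2
  obtain ⟨t, ht⟩ := hZr.exists_comp_d_eq hY (Nat.le_add_right i m) (Nat.lt_succ_self _) y (by
    rw [hyx, reassoc_of% (hZr.isComplex (i + m) le_rfl), zero_comp])
  exact ⟨t, (cancel_epi (Z.d (i + m + 1))).1 (ht.trans hyx)⟩

theorem leftNExact_of_weaklyEffaceable (h𝒳 : IsNExactStructure n 𝒳) {Y : NSeq M}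
    (hY : Y.IsComplex n)
    (h0 : ∀ (X : M) (x : X ⟶ Y.X 0), x ≫ Y.d 0 = 0 →
      ∃ (V : M) (g : V ⟶ X), AdmEpi n 𝒳 g ∧ g ≫ x = 0)
    (h1 : ∀ i, i + 1 ≤ n → ∀ (X : M) (x : X ⟶ Y.X (i + 1)), x ≫ Y.d (i + 1) = 0 →
      ∃ (V : M) (g : V ⟶ X), AdmEpi n 𝒳 g ∧ ∃ y : V ⟶ Y.X i, y ≫ Y.d i = g ≫ x) :
    LeftNExact n Y := by
  suffices H : ∀ i, i ≤ n → LeftNExact i Y from H n le_rfl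
  intro i hi
  induction i with
  | zero =>
    refine leftNExact_iff.2 ⟨Preadditive.mono_of_cancel_zero _ fun {X} x hx => ?_, by simp⟩
    obtain ⟨V, g, hg, hgx⟩ := h0 X x hx
    have := h𝒳.epi_of_admEpi hg
    exact zero_of_epi_comp g hgx
  | succ i ih =>
    refine (ih (Nat.le_of_succ_le hi)).succ (.of_exists_lift (hY i hi) fun {X} x hx => ?_)
    obtain ⟨V, g, hg, y, hy⟩ := h1 i hi X x hx
    exact h𝒳.exists_lift_of_admEpi (ih (Nat.le_of_succ_le hi)) hi hg x y hy

theorem mem_of_admMono (h𝒳 : IsNExactStructure n 𝒳) {S : NSeq M} (hS : RightNExact n S)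
    (h0 : AdmMono 𝒳 (S.d 0)) : S ∈ 𝒳 := by
  obtain ⟨U, hU, e0, e1, h⟩ := h0
  obtain ⟨hUc, hUl, hUr⟩ := h𝒳.nExact U hU
  obtain ⟨φ, hφ, hφ0, -⟩ :=
    hS.exists_hom hUc (eqToHom e0.symm) (eqToHom e1.symm) (by simp [h])
  obtain ⟨ψ, hψ, hψ0, hψ1⟩ :=
    hUr.exists_hom hS.isComplex (eqToHom e0) (eqToHom e1) (by simp [h])
  obtain ⟨s, hs⟩ := hS.exists_nullHomotopy hS.isComplex (IsNSeqHom.id.sub (hφ.comp hψ)) 0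
    (by simp [hφ0, hψ0])
  refine h𝒳.weakIsoClosed U hU S
    ⟨hS.isComplex, hUl.of_homotopy_retract hS.isComplex hφ hψ hs, hS⟩
    (.inl ⟨ψ, hψ, .inl ⟨0, n.zero_le, ?_, ?_⟩⟩)
  · rw [hψ0]; infer_instance
  · rw [hψ1]; infer_instance

theorem exists_admEpi_comp_eq (h𝒳 : IsNExactStructure n 𝒳) (hn : 1 ≤ n) {Z : NSeq M}
    (hZ : Z ∈ 𝒳) {A : M} (g : A ⟶ Z.X (n + 1)) :
    ∃ (V : M) (q : V ⟶ A) (v : V ⟶ Z.X n), AdmEpi n 𝒳 q ∧ q ≫ g = v ≫ Z.d n := by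
  obtain ⟨m, rfl⟩ := Nat.exists_eq_add_of_le' hn
  obtain ⟨T, f, rfl, hf, hc, -, hT⟩ := h𝒳.pullback Z hZ A g
  refine ⟨T.X m, T.d m, f m, hT, ?_⟩
  rw [← hc m le_rfl, hf, eqToHom_refl, Category.id_comp]

theorem exists_pushout_mem (h𝒳 : IsNExactStructure n 𝒳) (hn : 1 ≤ n) {Z : NSeq M} (hZ : Z ∈ 𝒳)
    {W : M} (f₀ : Z.X 0 ⟶ W) :
    ∃ S ∈ 𝒳, ∃ F : ∀ i, Z.X i ⟶ S.X i, IsNSeqHom n Z S F ∧ IsIso (F (n + 1)) ∧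
      ∃ e : S.X 0 ≅ W, F 0 ≫ e.hom = f₀ ∧
        ∀ {V : M} (y : Z.X 1 ⟶ V) (x : W ⟶ V), Z.d 0 ≫ y = f₀ ≫ x →
          ∃ b, S.d 0 ≫ b = e.hom ≫ x := by
  obtain ⟨m, rfl⟩ := Nat.exists_eq_add_of_le' hn
  have hZr := (h𝒳.nExact Z hZ).2.2
  obtain ⟨T, f, rfl, hf₀, hf, hp, hT⟩ := h𝒳.pushout Z hZ W f₀
  obtain rfl : f 0 = f₀ := by simpa using hf₀
  obtain ⟨p, hfp, hdp⟩ := hp.exists_prolongation hZr.isComplex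
  have := hZr.epi
  have : Epi p := epi_of_epi_fac hfp
  have hS : RightNExact (m + 1) (NSeq.prolong (m + 1) T p) := rightNExact_prolong
    (fun i hi => hp.isWeakCokernel hZr hf (Nat.succ_lt_succ hi))
    (hp.isWeakCokernel_prolongation hZr (hf m le_rfl) hfp hdp)
  obtain ⟨F, hF, hF0, hF1⟩ := exists_hom_prolong p f hf (𝟙 _) (by rw [Category.comp_id, hfp])
  refine ⟨_, h𝒳.mem_of_admMono hS (hT.prolong hn p), F, hF, by rw [hF1]; infer_instance,
    NSeq.prolongIso p (Nat.zero_le _), by simp [hF0], fun y x hyx => ?_⟩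
  obtain ⟨b, rfl⟩ := hp.exists_desc_zero hn y x hyx
  exact ⟨(NSeq.prolongIso p hn).hom ≫ b, by simp [NSeq.prolong_d p hn]⟩

theorem exists_hom_isIso_ends (h𝒳 : IsNExactStructure n 𝒳) (hn : 1 ≤ n) {Z Y : NSeq M} (hZ : Z ∈ 𝒳)
    (hY : Y.IsComplex n) {ρ : ∀ i, Z.X i ⟶ Y.X i} (hρ : IsNSeqHom n Z Y ρ)
    [IsIso (ρ (n + 1))] :
    ∃ S ∈ 𝒳, ∃ ψ : ∀ i, S.X i ⟶ Y.X i,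
      IsNSeqHom n S Y ψ ∧ IsIso (ψ 0) ∧ IsIso (ψ (n + 1)) := by
  obtain ⟨S, hS, F, hF, hF1, e, hF0, hdesc⟩ := h𝒳.exists_pushout_mem hn hZ (ρ 0)
  obtain ⟨b, hb⟩ := hdesc (ρ 1) (Y.d 0) (hρ 0 n.zero_le)
  obtain ⟨hSc, -, hSr⟩ := h𝒳.nExact S hS
  obtain ⟨ψ, hψ, hψ0, -⟩ := hSr.exists_hom hY e.hom b hb
  obtain ⟨ψ', hψ', hψ'0, hψ'1⟩ := (h𝒳.nExact Z hZ).2.2.exists_hom_comp_last_eq hn hSc hY hF hψ hρ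
    (by rw [hψ0, hF0])
  refine ⟨S, hS, ψ', hψ', by rw [hψ'0, hψ0]; infer_instance, ?_⟩
  exact IsIso.of_isIso_fac_left hψ'1

theorem exists_lift_of_isSplitMono (h𝒳 : IsNExactStructure n 𝒳) (hn : 1 ≤ n) {S Y : NSeq M}
    (hS : S ∈ 𝒳) (hY : LeftNExact n Y) {ψ : ∀ i, S.X i ⟶ Y.X i} (hψ : IsNSeqHom n S Y ψ)
    [IsSplitMono (ψ 0)] {A : M} (x : A ⟶ S.X (n + 1)) (y : A ⟶ Y.X n)
    (hxy : x ≫ ψ (n + 1) = y ≫ Y.d n) : ∃ l, l ≫ S.d n = x := by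
  obtain ⟨V, q, v, hq, hqv⟩ := h𝒳.exists_admEpi_comp_eq hn hS x
  obtain ⟨hSc, hSl, -⟩ := h𝒳.nExact S hS
  obtain ⟨U, hU, φ, hφ, b, hφ1⟩ := h𝒳.exists_hom_of_admEpi hq hSl v x hqv
  obtain ⟨hUc, -, hUr⟩ := h𝒳.nExact U hU
  obtain ⟨s, hs⟩ := hY.exists_nullHomotopy hUc (hφ.comp hψ) (b.hom ≫ y) (by
    simp only [hφ1, Category.assoc, hxy])
  obtain ⟨r, hr⟩ := hUr.exists_nullHomotopy hSc hφ (s 0 ≫ retraction (ψ 0)) (by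
    rw [← reassoc_of% hs.bot, IsSplitMono.id, Category.comp_id])
  exact ⟨b.inv ≫ r n, by rw [Category.assoc, ← hr.top, hφ1, Iso.inv_hom_id_assoc]⟩

theorem mem_of_isIso_ends (h𝒳 : IsNExactStructure n 𝒳) (hn : 1 ≤ n) {S Y : NSeq M} (hS : S ∈ 𝒳)
    (hY : LeftNExact n Y) {ψ : ∀ i, S.X i ⟶ Y.X i} (hψ : IsNSeqHom n S Y ψ) [IsIso (ψ 0)]
    [IsIso (ψ (n + 1))] : Y ∈ 𝒳 := by
  obtain ⟨-, hSl, hSr⟩ := h𝒳.nExact S hS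
  obtain ⟨l, hl⟩ := h𝒳.exists_lift_of_isSplitMono hn hS hY hψ (Y.d n ≫ inv (ψ (n + 1))) (𝟙 _)
    (by simp)
  obtain ⟨φ, hφ, -, hφ1⟩ := LeftNExact.exists_hom hY.isComplex hSl l _ hl.symm
  obtain ⟨s, hs⟩ := hY.exists_nullHomotopy hY.isComplex (IsNSeqHom.id.sub (hφ.comp hψ)) 0
    (by simp [hφ1])
  exact h𝒳.weakIsoClosed S hS Y
    ⟨hY.isComplex, hY, hSr.of_homotopy_retract hY.isComplex hφ hψ hs⟩
    (.inl ⟨ψ, hψ, .inr ⟨inferInstance, inferInstance⟩⟩)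

end IsNExactStructure

end Admissible

/-- Let `(M,𝒳)` be a small `n`-exact category and
`Y : Y⁰ → Y¹ → ⋯ → Yⁿ → Y^{n+1}` a complex in `M` such that every homology object of the
complex `0 → H_{Y⁰} → H_{Y¹} → ⋯ → H_{Y^{n+1}} → 0` of representable functors in `Mod(M)` is
weakly effaceable (equivalently, the induced sequence is exact in the localization of `Mod(M)`
at the weakly effaceable functors).  Then `Y` is an `𝒳`-admissible `n`-exact sequence,
i.e. `Y ∈ 𝒳`. -/
theorem mem_of_homology_weakly_effaceable
    {M : Type u} [SmallCategory M] [Preadditive M] [HasFiniteBiproducts M]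
    (n : ℕ) (hn : 1 ≤ n) (𝒳 : Set (NSeq M)) (h𝒳 : IsNExactStructure n 𝒳)
    (Y : NSeq M) (hcx : Y.IsComplex n)
    (heff : (repSeqOf n Y rfl rfl hcx).HomologyWeaklyEffaceable 𝒳) :
    Y ∈ 𝒳 := by
  obtain ⟨h0, h1, h2⟩ := (homologyWeaklyEffaceable_repSeqOf_iff hcx).1 heff
  have hY : LeftNExact n Y := h𝒳.leftNExact_of_weaklyEffaceable hcx h0 h1
  obtain ⟨V, g, hg, y, hy⟩ := h2 (Y.X (n + 1)) (𝟙 _)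
  obtain ⟨Z, hZ, ρ, hρ, b, hρ_last⟩ := h𝒳.exists_hom_of_admEpi hg hY y (𝟙 _) hy.symm
  have : IsIso (ρ (n + 1)) := by rw [hρ_last]; infer_instance
  obtain ⟨S, hS, ψ, hψ, _, _⟩ := h𝒳.exists_hom_isIso_ends hn hZ hcx hρ
  exact h𝒳.mem_of_isIso_ends hn hS hY hψ

end NExactCat
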